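/- With A(q) = Y(q)/φ(q)⁴ where Y(q) = Z(q, χ₀, χ₀, χ₀, χ₀) for the principal character χ₀ mod q, the function s(p) = 1 + Σ_{α ≥ 1} A(p^α) satisfies the product lower bound ∏_{p ≤ P} s(p) ≫ (log P)^{−960} uniformly for even integers N (on which A implicitly depends). -/

import Mathlib

open Classical

noncomputable def eC (t : ℝ) : ℂ := Complex.exp (2 * Real.pi * Complex.I * t)

/-- `C_k(h, χ₀)` for the principal character `χ₀` mod `q`. -/
noncomputable def Ck0 (q k h : ℕ) : ℂ :=
  ∑ l ∈ (Finset.Icc 1 q).filter (fun l => Nat.Coprime l q), eC ((h : ℝ) * (l : ℝ) ^ k / q)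

noncomputable def Yq (q : ℕ) (N : ℤ) : ℂ :=
  ∑ h ∈ (Finset.Icc 1 q).filter (fun h => Nat.Coprime h q),
    eC (-(N : ℝ) * h / q) * Ck0 q 2 h * Ck0 q 3 h * Ck0 q 4 h * Ck0 q 5 h

noncomputable def Aq (q : ℕ) (N : ℤ) : ℂ := Yq q N / (Nat.totient q : ℂ) ^ 4

noncomputable def sFactor (p : ℕ) (N : ℤ) : ℂ := 1 + ∑' α : ℕ, Aq (p ^ (α + 1)) N

/-!
For `α ≥ 2` one of the exponents `2`, `3` is prime to `p`, and the corresponding sum modulo `p ^ α`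
vanishes, so `s(p) = 1 + A(p)`. Two estimates then bound the product below by a positive constant,
without any logarithmic loss.

* `A(p) = O(p ^ (-3 / 2))`. The product of power sums `∏ᵢ ∑ ψ(h uᵏⁱ)` does not change when `h` is
  multiplied by an `m`-th power with `m = ∏ᵢ kᵢ`. Averaging over these powers turns the factor
  `ψ(-Nh)` into a power sum, which has size `O(√p)` if `p ∤ N`. If `p ∣ N` that factor is trivial,
  but `3` is prime to `2 * 4 * 5`, so averaging over `40`-th powers turns the cubic sum into `-1`.
* `s(p) = p M / (p - 1) ^ 4 ≥ p ^ (-3)`, where `M` counts the solutions of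
  `x² + y³ + z⁴ + w⁵ = N` in units modulo `p`: Cauchy–Davenport gives `M > 0` for odd `p`, and for
  `p = 2` it is the evenness of `N`.
-/

lemma one_add_pow_of_sq_eq_zero {R : Type*} [CommRing R] {x : R} (hx : x ^ 2 = 0) (k : ℕ) :
    (1 + x) ^ k = 1 + k * x := by
  induction k with
  | zero => simp
  | succ k ih =>
    rw [pow_succ, ih]
    push_cast
    linear_combination (k : R) * hx

lemma sum_comp_le_mul_sum {α β : Type*} [Fintype α] [Fintype β] [DecidableEq β] {f : β → ℝ}
    (hf : ∀ b, 0 ≤ f b) {g : α → β} {n : ℕ}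
    (hg : ∀ b, (Finset.univ.filter fun a => g a = b).card ≤ n) :
    ∑ a, f (g a) ≤ n * ∑ b, f b := by
  rw [← Finset.sum_fiberwise Finset.univ g, Finset.mul_sum]
  refine Finset.sum_le_sum fun b _ => ?_
  rw [Finset.sum_congr rfl (g := fun _ => f b) fun a ha => by rw [(Finset.mem_filter.1 ha).2],
    Finset.sum_const, nsmul_eq_mul]
  gcongr
  exacts [hf b, hg b]

lemma norm_sum_mul_le_of_translation_invariant {G 𝕜 : Type*} [Group G] [Fintype G] [RCLike 𝕜]
    {f g : G → 𝕜} {φ : G → G} {B D : ℝ} (hf : ∀ x y, f (x * φ y) = f x) (hB : ∀ x, ‖f x‖ ≤ B)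
    (hD : ∀ x, ‖∑ y, g (x * φ y)‖ ≤ D) :
    ‖∑ x, f x * g x‖ ≤ B * D := by
  have haverage : Fintype.card G * ∑ x, f x * g x = ∑ x, f x * ∑ y, g (x * φ y) := by
    calc Fintype.card G * ∑ x, f x * g x
        = ∑ _y : G, ∑ x, f x * g x := by
          rw [Finset.sum_const, Finset.card_univ, nsmul_eq_mul]
      _ = ∑ y, ∑ x, f (x * φ y) * g (x * φ y) := Finset.sum_congr rfl fun y _ =>
          (Equiv.sum_comp (Equiv.mulRight (φ y)) fun x => f x * g x).symm
      _ = ∑ x, f x * ∑ y, g (x * φ y) := by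
          rw [Finset.sum_comm]
          simp only [hf, Finset.mul_sum]
  have hcard : (0 : ℝ) < Fintype.card G := Nat.cast_pos.2 Fintype.card_pos
  refine le_of_mul_le_mul_left ?_ hcard
  calc (Fintype.card G : ℝ) * ‖∑ x, f x * g x‖
      = ‖∑ x, f x * ∑ y, g (x * φ y)‖ := by rw [← haverage, norm_mul, RCLike.norm_natCast]
    _ ≤ ∑ _x : G, B * D := norm_sum_le_of_le _ fun x _ => by
        rw [norm_mul]
        exact mul_le_mul (hB x) (hD x) (norm_nonneg _) ((norm_nonneg _).trans (hB x))
    _ = Fintype.card G * (B * D) := by rw [Finset.sum_const, Finset.card_univ, nsmul_eq_mul]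

lemma addChar_map_sum {A M ι : Type*} [AddCommMonoid A] [CommMonoid M] (ψ : AddChar A M)
    (f : ι → A) (s : Finset ι) : ψ (∑ i ∈ s, f i) = ∏ i ∈ s, ψ (f i) :=
  map_prod ψ.toMonoidHom (fun i => Multiplicative.ofAdd (f i)) s

section UnitPowSum

variable {R : Type*} [CommRing R] [Fintype R] [DecidableEq R]

/-- The power sum `∑ ψ(a uᵏ)` over the units `u` of a finite ring; `Ck0 q k h` is the case of the
standard character `ψ(x) = e(x / q)` of `ZMod q`. -/
noncomputable def unitPowSum (ψ : AddChar R ℂ) (k : ℕ) (a : R) : ℂ :=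
  ∑ u : Rˣ, ψ (a * (u : R) ^ k)

/-- The exponential sum `∑ ψ(-Nh) ∏ᵢ ∑ ψ(h uᵏⁱ)` over unit frequencies `h`. Over a field it is the
error term in the count of representations of `N` as `∑ᵢ xᵢ ^ kᵢ` with units `xᵢ`; `Yq q N` is the
case `k = (2, 3, 4, 5)` over `ZMod q`. -/
noncomputable def unitRepSum {ι : Type*} [Fintype ι] (ψ : AddChar R ℂ) (k : ι → ℕ) (N : R) : ℂ :=
  ∑ h : Rˣ, ψ (-N * h) * ∏ i, unitPowSum ψ (k i) (h : R)

lemma unitPowSum_zero_right (ψ : AddChar R ℂ) (k : ℕ) :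
    unitPowSum ψ k 0 = Fintype.card Rˣ := by
  simp [unitPowSum]

lemma unitPowSum_mul_pow (ψ : AddChar R ℂ) (k : ℕ) (a : R) (u : Rˣ) :
    unitPowSum ψ k (a * (u : R) ^ k) = unitPowSum ψ k a := by
  rw [unitPowSum, unitPowSum, ← Equiv.sum_comp (Equiv.mulLeft u) fun v => ψ (a * (v : R) ^ k)]
  simp only [Equiv.coe_mulLeft, Units.val_mul, mul_pow, mul_assoc]

lemma prod_unitPowSum_mul_pow {ι : Type*} (ψ : AddChar R ℂ) (k : ι → ℕ)
    (s : Finset ι) (a : R) (u : Rˣ) :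
    ∏ i ∈ s, unitPowSum ψ (k i) (a * (u : R) ^ ∏ i ∈ s, k i) =
      ∏ i ∈ s, unitPowSum ψ (k i) a := by
  refine Finset.prod_congr rfl fun i hi => ?_
  obtain ⟨m, hm⟩ := Finset.dvd_prod_of_mem k hi
  rw [hm, mul_comm (k i), pow_mul, ← Units.val_pow_eq_pow_val, unitPowSum_mul_pow]

lemma unitPowSum_eq_zero_of_sq_eq_zero {ψ : AddChar R ℂ} (hψ : ψ.IsPrimitive) {k : ℕ}
    (hk : IsUnit (k : R)) {x : R} (hx : x ≠ 0) (hx2 : x ^ 2 = 0) (a : Rˣ) :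
    unitPowSum ψ k (a : R) = 0 := by
  have hnil (t : R) : (x * t) ^ 2 = 0 := by rw [mul_pow, hx2, zero_mul]
  have hunit (t : R) : IsUnit (1 + x * t) := IsNilpotent.isUnit_one_add ⟨2, hnil t⟩
  -- Substitute `u ↦ u * (1 + x * t)`, then average over `t`.
  have hshift (t : R) : unitPowSum ψ k (a : R) =
      ∑ u : Rˣ, ψ (a * (u : R) ^ k) * ψ (t * (a * (u : R) ^ k * k * x)) := by
    rw [unitPowSum, ← Equiv.sum_comp (Equiv.mulRight (hunit t).unit)]
    refine Finset.sum_congr rfl fun u _ => ?_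
    rw [← AddChar.map_add_eq_mul, Equiv.coe_mulRight, Units.val_mul, IsUnit.unit_spec, mul_pow,
      one_add_pow_of_sq_eq_zero (hnil t)]
    congr 1
    ring
  have hne (u : Rˣ) : (a * (u : R) ^ k * k * x : R) ≠ 0 := by
    rwa [Ne, ((a.isUnit.mul (u.isUnit.pow k)).mul hk).mul_right_eq_zero]
  have hsum : (Fintype.card R : ℂ) * unitPowSum ψ k (a : R) = 0 := by
    calc (Fintype.card R : ℂ) * unitPowSum ψ k (a : R)
        = ∑ t : R, ∑ u : Rˣ, ψ (a * (u : R) ^ k) * ψ (t * (a * (u : R) ^ k * k * x)) := by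
          rw [← Finset.sum_congr rfl fun t _ => hshift t, Finset.sum_const, Finset.card_univ,
            nsmul_eq_mul]
      _ = ∑ u : Rˣ, ψ (a * (u : R) ^ k) * ∑ t : R, ψ (t * (a * (u : R) ^ k * k * x)) := by
          rw [Finset.sum_comm]
          simp only [Finset.mul_sum]
      _ = 0 := Finset.sum_eq_zero fun u _ => by
          rw [AddChar.sum_mulShift _ hψ, if_neg (hne u), Nat.cast_zero, mul_zero]
  have : Nonempty R := ⟨0⟩
  exact (mul_eq_zero.1 hsum).resolve_left (Nat.cast_ne_zero.2 Fintype.card_ne_zero)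

end UnitPowSum

section FiniteField

variable {F : Type*} [Field F] [Fintype F] [DecidableEq F]

lemma sum_eq_add_sum_units {M : Type*} [AddCommMonoid M] (f : F → M) :
    ∑ x, f x = f 0 + ∑ u : Fˣ, f u := by
  rw [Fintype.sum_eq_add_sum_subtype_ne f 0, ← Equiv.sum_comp unitsEquivNeZero]
  rfl

lemma card_units_pow_eq_le {k : ℕ} (hk : 0 < k) (c : F) :
    (Finset.univ.filter fun u : Fˣ => (u : F) ^ k = c).card ≤ k := by
  rw [← Finset.card_image_of_injective _ (Units.val_injective (α := F))]
  refine (Finset.card_le_card (t := (Polynomial.nthRoots k c).toFinset) ?_).trans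
    ((Multiset.toFinset_card_le _).trans (Polynomial.card_nthRoots k c))
  intro x hx
  obtain ⟨u, hu, rfl⟩ := Finset.mem_image.1 hx
  rw [Multiset.mem_toFinset, Polynomial.mem_nthRoots hk]
  exact (Finset.mem_filter.1 hu).2

lemma sum_units_unitPowSum_mul {ψ : AddChar F ℂ} (hψ : ψ.IsPrimitive) (k : ℕ) (a : Fˣ) :
    ∑ u : Fˣ, unitPowSum ψ k (a * u : F) = -Fintype.card Fˣ := by
  have hinner (v : Fˣ) : ∑ u : Fˣ, ψ (a * u * (v : F) ^ k) = -1 := by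
    have hall := AddChar.sum_mulShift (a * (v : F) ^ k) hψ
    rw [sum_eq_add_sum_units, if_neg (by simp), zero_mul, AddChar.map_zero_eq_one,
      Nat.cast_zero] at hall
    rw [eq_neg_iff_add_eq_zero, add_comm, ← hall]
    congr! 3
    ring
  simp only [unitPowSum]
  rw [Finset.sum_comm]
  simp only [hinner, Finset.sum_const, Finset.card_univ, nsmul_eq_mul, mul_neg, mul_one]

lemma exists_sum_units_unitPowSum_mul_pow {ψ : AddChar F ℂ} (hψ : ψ.IsPrimitive) {m k : ℕ}
    (hmk : m.Coprime k) :
    ∃ x : ℤ, ∀ a : Fˣ,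
      ∑ u : Fˣ, unitPowSum ψ k (a * ((u ^ x) ^ m : Fˣ) : F) = -Fintype.card Fˣ := by
  obtain ⟨x, y, hxy⟩ := Nat.isCoprime_iff_coprime.2 hmk
  refine ⟨x, fun a => ?_⟩
  have hpow (u : Fˣ) : (u ^ x) ^ m = u * (u ^ (-y)) ^ k := by
    rw [← zpow_natCast, ← zpow_natCast, ← zpow_mul, ← zpow_mul, ← zpow_one_add]
    congr 1
    linear_combination hxy
  simp only [hpow, Units.val_mul, Units.val_pow_eq_pow_val, ← mul_assoc, unitPowSum_mul_pow]
  exact sum_units_unitPowSum_mul hψ k a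

lemma sum_norm_sq_unitPowSum_le {ψ : AddChar F ℂ} (hψ : ψ.IsPrimitive) {k : ℕ} (hk : 0 < k) :
    ∑ a, ‖unitPowSum ψ k a‖ ^ 2 ≤ (Fintype.card F : ℝ) * (Fintype.card Fˣ * k) := by
  have hsq (a : F) : ((‖unitPowSum ψ k a‖ ^ 2 : ℝ) : ℂ) =
      ∑ u : Fˣ, ∑ v : Fˣ, ψ (a * ((v : F) ^ k - (u : F) ^ k)) := by
    push_cast
    rw [← Complex.conj_mul', unitPowSum, map_sum, Finset.sum_mul_sum]
    refine Finset.sum_congr rfl fun u _ => Finset.sum_congr rfl fun v _ => ?_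
    rw [← AddChar.map_neg_eq_conj, ← AddChar.map_add_eq_mul]
    congr 1
    ring
  have hcount : ((∑ a, ‖unitPowSum ψ k a‖ ^ 2 : ℝ) : ℂ) =
      ∑ u : Fˣ, Fintype.card F *
        ((Finset.univ.filter fun v : Fˣ => (v : F) ^ k = (u : F) ^ k).card : ℂ) := by
    simp only [Complex.ofReal_sum, hsq]
    rw [Finset.sum_comm]
    refine Finset.sum_congr rfl fun u _ => ?_
    rw [Finset.sum_comm, Finset.card_filter, Nat.cast_sum, Finset.mul_sum]
    refine Finset.sum_congr rfl fun v _ => ?_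
    rw [AddChar.sum_mulShift _ hψ]
    simp only [sub_eq_zero]
    split_ifs <;> simp
  have hcount' : ∑ a, ‖unitPowSum ψ k a‖ ^ 2 =
      ∑ u : Fˣ, Fintype.card F *
        ((Finset.univ.filter fun v : Fˣ => (v : F) ^ k = (u : F) ^ k).card : ℝ) := by
    exact_mod_cast hcount
  calc ∑ a, ‖unitPowSum ψ k a‖ ^ 2
      ≤ ∑ _u : Fˣ, (Fintype.card F * k : ℝ) := by
        rw [hcount']
        gcongr with u
        exact card_units_pow_eq_le hk _
    _ = Fintype.card F * (Fintype.card Fˣ * k) := by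
        rw [Finset.sum_const, Finset.card_univ, nsmul_eq_mul]
        ring

lemma norm_unitPowSum_le {ψ : AddChar F ℂ} (hψ : ψ.IsPrimitive) {k : ℕ} (hk : 0 < k) (a : Fˣ) :
    ‖unitPowSum ψ k (a : F)‖ ≤ k * √(Fintype.card F) := by
  have hfiber (b : F) :
      (Finset.univ.filter fun u : Fˣ => (a : F) * (u : F) ^ k = b).card ≤ k := by
    refine le_of_eq_of_le ?_ (card_units_pow_eq_le hk ((a : F)⁻¹ * b))
    simp only [eq_inv_mul_iff_mul_eq₀ a.ne_zero]
  have hmul : (Fintype.card Fˣ : ℝ) * ‖unitPowSum ψ k (a : F)‖ ^ 2 ≤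
      Fintype.card Fˣ * (k * √(Fintype.card F)) ^ 2 := by
    calc (Fintype.card Fˣ : ℝ) * ‖unitPowSum ψ k (a : F)‖ ^ 2
        = ∑ u : Fˣ, ‖unitPowSum ψ k ((a : F) * (u : F) ^ k)‖ ^ 2 := by
          simp only [unitPowSum_mul_pow, Finset.sum_const, Finset.card_univ, nsmul_eq_mul]
      _ ≤ k * ∑ b, ‖unitPowSum ψ k b‖ ^ 2 :=
          sum_comp_le_mul_sum (f := fun b => ‖unitPowSum ψ k b‖ ^ 2) (fun b => by positivity) hfiber
      _ ≤ k * (Fintype.card F * (Fintype.card Fˣ * k)) := by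
          gcongr
          exact sum_norm_sq_unitPowSum_le hψ hk
      _ = Fintype.card Fˣ * (k * √(Fintype.card F)) ^ 2 := by
          rw [mul_pow, Real.sq_sqrt (Nat.cast_nonneg _)]
          ring
  have hcard : (0 : ℝ) < Fintype.card Fˣ := Nat.cast_pos.2 Fintype.card_pos
  exact le_of_sq_le_sq (le_of_mul_le_mul_left hmul hcard) (by positivity)

lemma norm_prod_unitPowSum_le {ψ : AddChar F ℂ} (hψ : ψ.IsPrimitive) {ι : Type*}
    {k : ι → ℕ} (hk : ∀ i, 0 < k i) (s : Finset ι) (a : Fˣ) :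
    ‖∏ i ∈ s, unitPowSum ψ (k i) (a : F)‖ ≤ (∏ i ∈ s, k i : ℕ) * √(Fintype.card F) ^ s.card := by
  rw [norm_prod, Nat.cast_prod, ← Finset.prod_const, ← Finset.prod_mul_distrib]
  exact Finset.prod_le_prod (fun i _ => norm_nonneg _) fun i _ => norm_unitPowSum_le hψ (hk i) a

end FiniteField

section RepresentationSum

variable {F ι : Type*} [Field F] [Fintype F] [DecidableEq F] [Fintype ι]

lemma norm_unitRepSum_le_of_ne_zero {ψ : AddChar F ℂ} (hψ : ψ.IsPrimitive) {k : ι → ℕ}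
    (hk : ∀ i, 0 < k i) {N : F} (hN : N ≠ 0) :
    ‖unitRepSum ψ k N‖ ≤
      (∏ i, k i : ℕ) ^ 2 * √(Fintype.card F) ^ (Fintype.card ι + 1) := by
  have haverage (h : Fˣ) : ‖∑ u : Fˣ, ψ (-N * (h * u ^ ∏ i, k i : Fˣ))‖ ≤
      (∏ i, k i : ℕ) * √(Fintype.card F) := by
    have := norm_unitPowSum_le hψ (Finset.prod_pos (s := .univ) fun i _ => hk i)
      (Units.mk0 (-N) (neg_ne_zero.2 hN) * h)
    simpa only [unitPowSum, Units.val_mul, Units.val_pow_eq_pow_val, Units.val_mk0,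
      mul_assoc] using this
  calc ‖unitRepSum ψ k N‖
      = ‖∑ h : Fˣ, (∏ i, unitPowSum ψ (k i) (h : F)) * ψ (-N * h)‖ := by
        simp only [unitRepSum, mul_comm]
    _ ≤ ((∏ i, k i : ℕ) * √(Fintype.card F) ^ Fintype.card ι) *
          ((∏ i, k i : ℕ) * √(Fintype.card F)) :=
        norm_sum_mul_le_of_translation_invariant (φ := fun u => u ^ ∏ i, k i)
          (fun h u => by
            rw [Units.val_mul, Units.val_pow_eq_pow_val, prod_unitPowSum_mul_pow])
          (norm_prod_unitPowSum_le hψ hk Finset.univ) haverage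
    _ = (∏ i, k i : ℕ) ^ 2 * √(Fintype.card F) ^ (Fintype.card ι + 1) := by ring

variable [DecidableEq ι]

lemma norm_unitRepSum_zero_le {ψ : AddChar F ℂ} (hψ : ψ.IsPrimitive) {k : ι → ℕ}
    (hk : ∀ i, 0 < k i) {j : ι} (hj : (∏ i ∈ Finset.univ.erase j, k i).Coprime (k j)) :
    ‖unitRepSum ψ k 0‖ ≤ (∏ i ∈ Finset.univ.erase j, k i : ℕ) *
      √(Fintype.card F) ^ (Finset.univ.erase j).card * Fintype.card Fˣ := by
  obtain ⟨x, hx⟩ := exists_sum_units_unitPowSum_mul_pow hψ hj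
  calc ‖unitRepSum ψ k 0‖
      = ‖∑ h : Fˣ, (∏ i ∈ Finset.univ.erase j, unitPowSum ψ (k i) (h : F)) *
          unitPowSum ψ (k j) h‖ := by
        simp only [unitRepSum, neg_zero, zero_mul, AddChar.map_zero_eq_one, one_mul,
          Finset.prod_erase_mul _ _ (Finset.mem_univ j)]
    _ ≤ (∏ i ∈ Finset.univ.erase j, k i : ℕ) *
          √(Fintype.card F) ^ (Finset.univ.erase j).card * Fintype.card Fˣ :=
        norm_sum_mul_le_of_translation_invariant
          (φ := fun u => (u ^ x) ^ ∏ i ∈ Finset.univ.erase j, k i)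
          (fun h u => by
            rw [Units.val_mul, Units.val_pow_eq_pow_val, prod_unitPowSum_mul_pow])
          (norm_prod_unitPowSum_le hψ hk _) fun h => by
            simp only [Units.val_mul, hx, norm_neg, RCLike.norm_natCast, le_refl]

lemma norm_unitRepSum_le {ψ : AddChar F ℂ} (hψ : ψ.IsPrimitive) {k : ι → ℕ} (hk : ∀ i, 0 < k i)
    {j : ι} (hj : (∏ i ∈ Finset.univ.erase j, k i).Coprime (k j)) (N : F) :
    ‖unitRepSum ψ k N‖ ≤
      (∏ i, k i : ℕ) ^ 2 * √(Fintype.card F) ^ (Fintype.card ι + 1) := by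
  rcases ne_or_eq N 0 with hN | rfl
  · exact norm_unitRepSum_le_of_ne_zero hψ hk hN
  have hprod : ∏ i ∈ Finset.univ.erase j, k i ≤ (∏ i, k i) ^ 2 := by
    calc ∏ i ∈ Finset.univ.erase j, k i
        ≤ ∏ i, k i := Finset.prod_le_univ_prod_of_one_le' hk
      _ ≤ (∏ i, k i) ^ 2 := Nat.le_self_pow two_ne_zero _
  have hcard : (Fintype.card Fˣ : ℝ) ≤ √(Fintype.card F) ^ 2 := by
    rw [Real.sq_sqrt (Nat.cast_nonneg _), Fintype.card_units]
    exact Nat.cast_le.2 (Nat.sub_le _ _)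
  have hsucc : (Finset.univ.erase j).card + 2 = Fintype.card ι + 1 := by
    rw [← Finset.card_univ, ← Finset.card_erase_add_one (Finset.mem_univ j)]
  calc ‖unitRepSum ψ k 0‖
      ≤ (∏ i ∈ Finset.univ.erase j, k i : ℕ) *
          √(Fintype.card F) ^ (Finset.univ.erase j).card * Fintype.card Fˣ :=
        norm_unitRepSum_zero_le hψ hk hj
    _ ≤ ((∏ i, k i) ^ 2 : ℕ) * √(Fintype.card F) ^ (Finset.univ.erase j).card *
          √(Fintype.card F) ^ 2 := by gcongr
    _ = (∏ i, k i : ℕ) ^ 2 * √(Fintype.card F) ^ (Fintype.card ι + 1) := by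
        rw [← hsucc, pow_add, Nat.cast_pow, mul_assoc]

/-- The number of representations `N = ∑ᵢ xᵢ ^ kᵢ` with every `xᵢ` a unit. -/
def unitRepCount (k : ι → ℕ) (N : F) : ℕ :=
  (Finset.univ.filter fun x : ι → Fˣ => ∑ i, (x i : F) ^ k i = N).card

lemma card_mul_unitRepCount {ψ : AddChar F ℂ} (hψ : ψ.IsPrimitive) (k : ι → ℕ) (N : F) :
    (Fintype.card F : ℂ) * unitRepCount k N =
      Fintype.card Fˣ ^ Fintype.card ι + unitRepSum ψ k N := by
  have hexpand (h : F) : ψ (-N * h) * ∏ i, unitPowSum ψ (k i) h =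
      ∑ x : ι → Fˣ, ψ (h * (∑ i, (x i : F) ^ k i - N)) := by
    simp only [unitPowSum]
    rw [Fintype.prod_sum, Finset.mul_sum]
    refine Finset.sum_congr rfl fun x _ => ?_
    rw [← addChar_map_sum, ← AddChar.map_add_eq_mul, ← Finset.mul_sum]
    congr 1
    ring
  calc (Fintype.card F : ℂ) * unitRepCount k N
      = ∑ x : ι → Fˣ, ∑ h : F, ψ (h * (∑ i, (x i : F) ^ k i - N)) := by
        rw [unitRepCount, Finset.card_filter, Nat.cast_sum, Finset.mul_sum]
        refine Finset.sum_congr rfl fun x _ => ?_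
        rw [AddChar.sum_mulShift _ hψ]
        simp only [sub_eq_zero]
        split_ifs <;> simp
    _ = ∑ h : F, ψ (-N * h) * ∏ i, unitPowSum ψ (k i) h := by
        rw [Finset.sum_comm]
        simp only [hexpand]
    _ = Fintype.card Fˣ ^ Fintype.card ι + unitRepSum ψ k N := by
        rw [sum_eq_add_sum_units, unitRepSum]
        simp only [mul_zero, AddChar.map_zero_eq_one, one_mul, unitPowSum_zero_right,
          Finset.prod_const, Finset.card_univ]

end RepresentationSum

section Solvability

open scoped Pointwise

variable {p : ℕ} [Fact p.Prime] {ι : Type*}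

lemma cauchy_davenport_finset_sum (A : ι → Finset (ZMod p)) (s : Finset ι)
    (hA : ∀ i ∈ s, (A i).Nonempty) :
    min p (∑ i ∈ s, ((A i).card - 1) + 1) ≤ (∑ i ∈ s, A i).card := by
  induction s using Finset.cons_induction with
  | empty => simp
  | cons i s hi ih =>
    have hs : ∀ j ∈ s, (A j).Nonempty := fun j hj => hA j (Finset.mem_cons_of_mem hj)
    have hi' : (A i).Nonempty := hA i (Finset.mem_cons_self i s)
    have hne : (∑ j ∈ s, A j).Nonempty :=
      Finset.card_pos.1 <| (lt_min (Fact.out : p.Prime).pos (Nat.succ_pos _)).trans_le (ih hs)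
    have hCD := ZMod.cauchy_davenport (Fact.out : p.Prime) hi' hne
    have hcard_sum := ih hs
    have hcard_pos := hi'.card_pos
    rw [Finset.sum_cons, Finset.sum_cons]
    omega

lemma card_image_units_pow {F : Type*} [Field F] [Fintype F] [DecidableEq F] (k : ℕ) :
    (Finset.univ.image fun u : Fˣ => (u : F) ^ k).card =
      Fintype.card Fˣ / (Fintype.card Fˣ).gcd k := by
  have hrange : (Set.range fun u : Fˣ => (u : F) ^ k) =
      Units.val '' ((powMonoidHom k : Fˣ →* Fˣ).range : Set Fˣ) := by
    ext
    simp
  rw [← Set.ncard_coe_finset, Finset.coe_image, Finset.coe_univ, Set.image_univ, hrange,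
    Set.ncard_image_of_injective _ Units.val_injective, ← Nat.card_eq_fintype_card,
    ← IsCyclic.card_powMonoidHom_range, ← Nat.card_coe_set_eq, SetLike.coe_sort_coe]

variable [Fintype ι] [DecidableEq ι]

lemma unitRepCount_pos_of_le_sum {k : ι → ℕ}
    (hk : p - 1 ≤ ∑ i, ((p - 1) / (p - 1).gcd (k i) - 1)) (N : ZMod p) :
    0 < unitRepCount k N := by
  set A : ι → Finset (ZMod p) := fun i => Finset.univ.image fun u : (ZMod p)ˣ => (u : ZMod p) ^ k i
  have hcard : Fintype.card (ZMod p) ≤ (∑ i, A i).card := by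
    have hCD := cauchy_davenport_finset_sum A Finset.univ fun i _ => Finset.univ_nonempty.image _
    have hcardA (i : ι) : (A i).card = (p - 1) / (p - 1).gcd (k i) := by
      rw [card_image_units_pow, ZMod.card_units]
    simp only [hcardA] at hCD
    rw [ZMod.card]
    omega
  have hmem : N ∈ (∑ i, A i : Finset (ZMod p)) := by
    rw [(Finset.card_eq_iff_eq_univ _).1 (le_antisymm (Finset.card_le_univ _) hcard)]
    exact Finset.mem_univ N
  rw [← Finset.mem_coe, Finset.coe_sum, Set.mem_fintype_sum] at hmem
  obtain ⟨y, hy, hsum⟩ := hmem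
  simp only [A, Finset.coe_image, Finset.coe_univ, Set.image_univ, Set.mem_range] at hy
  choose x hx using hy
  refine Finset.card_pos.2 ⟨x, Finset.mem_filter.2 ⟨Finset.mem_univ _, ?_⟩⟩
  simp only [hx, hsum]

end Solvability

lemma le_sum_div_gcd_two_three_four_five {n : ℕ} (hn : Even n) :
    n ≤ ∑ i, (n / n.gcd (![2, 3, 4, 5] i) - 1) := by
  rw [Fin.sum_univ_four]
  change n ≤ n / n.gcd 2 - 1 + (n / n.gcd 3 - 1) + (n / n.gcd 4 - 1) + (n / n.gcd 5 - 1)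
  rcases lt_or_ge n 24 with hsmall | hlarge
  · interval_cases n <;> revert hn <;> decide
  · have hle (k : ℕ) (hk : 0 < k) : n / k ≤ n / n.gcd k :=
      Nat.div_le_div_left (Nat.gcd_le_right _ hk) (Nat.gcd_pos_of_pos_right _ hk)
    have h2 := hle 2 two_pos
    have h3 := hle 3 three_pos
    have h4 := hle 4 four_pos
    have h5 := hle 5 (by norm_num)
    omega

section SingularSeries

lemma eC_intCast_div (q : ℕ) [NeZero q] (m : ℤ) :
    eC ((m : ℝ) / q) = ZMod.stdAddChar (m : ZMod q) := by
  rw [ZMod.stdAddChar_coe, eC]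
  congr 1
  push_cast
  ring

lemma sum_filter_coprime_eq_sum_units {M : Type*} [AddCommMonoid M] (q : ℕ) [NeZero q]
    (f : ZMod q → M) :
    ∑ l ∈ (Finset.Icc 1 q).filter (fun l => Nat.Coprime l q), f (l : ZMod q) =
      ∑ u : (ZMod q)ˣ, f u := by
  have hcast (u : (ZMod q)ˣ) : ((((u : ZMod q) - 1).val + 1 : ℕ) : ZMod q) = u := by
    rw [Nat.cast_add_one, ZMod.natCast_zmod_val, sub_add_cancel]
  refine Finset.sum_bij' (fun l hl => ZMod.unitOfCoprime l (Finset.mem_filter.1 hl).2)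
    (fun u _ => ((u : ZMod q) - 1).val + 1) (fun _ _ => Finset.mem_univ _) (fun u _ => ?_)
    (fun l hl => ?_) (fun u _ => ?_) fun l hl => by rw [ZMod.coe_unitOfCoprime]
  · rw [Finset.mem_filter, Finset.mem_Icc, ← ZMod.isUnit_iff_coprime, hcast]
    exact ⟨⟨Nat.succ_pos _, ZMod.val_lt _⟩, u.isUnit⟩
  · obtain ⟨hl1, hlq⟩ := Finset.mem_Icc.1 (Finset.mem_filter.1 hl).1
    obtain ⟨m, rfl⟩ := Nat.exists_eq_add_one.2 hl1
    rw [ZMod.coe_unitOfCoprime, Nat.cast_add_one, add_sub_cancel_right, ZMod.val_cast_of_lt hlq]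
  · ext
    rw [ZMod.coe_unitOfCoprime, hcast]

lemma Ck0_eq_unitPowSum (q k h : ℕ) [NeZero q] :
    Ck0 q k h = unitPowSum ZMod.stdAddChar k (h : ZMod q) := by
  rw [Ck0, unitPowSum,
    ← sum_filter_coprime_eq_sum_units q fun x => ZMod.stdAddChar ((h : ZMod q) * x ^ k)]
  refine Finset.sum_congr rfl fun l _ => ?_
  simpa using eC_intCast_div q (h * (l : ℤ) ^ k)

lemma Yq_eq_unitRepSum (q : ℕ) [NeZero q] (N : ℤ) :
    Yq q N = unitRepSum ZMod.stdAddChar ![2, 3, 4, 5] (N : ZMod q) := by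
  rw [Yq, unitRepSum, ← sum_filter_coprime_eq_sum_units q fun h : ZMod q =>
    ZMod.stdAddChar (-(N : ZMod q) * h) * ∏ i, unitPowSum ZMod.stdAddChar (![2, 3, 4, 5] i) h]
  refine Finset.sum_congr rfl fun h _ => ?_
  have hchar : eC (-(N : ℝ) * h / q) = ZMod.stdAddChar (-(N : ZMod q) * (h : ZMod q)) := by
    simpa using eC_intCast_div q (-N * h)
  rw [Fin.prod_univ_four, hchar]
  simp only [Ck0_eq_unitPowSum, ← mul_assoc]
  rfl

lemma unitPowSum_prime_pow_eq_zero {p k : ℕ} [Fact p.Prime] (hk : k.Coprime p) (α : ℕ)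
    (a : (ZMod (p ^ (α + 2)))ˣ) :
    unitPowSum ZMod.stdAddChar k (a : ZMod (p ^ (α + 2))) = 0 := by
  have hp : p.Prime := Fact.out
  have hunit : IsUnit (k : ZMod (p ^ (α + 2))) := (ZMod.isUnit_iff_coprime k _).2 (hk.pow_right _)
  have hne : ((p ^ (α + 1) : ℕ) : ZMod (p ^ (α + 2))) ≠ 0 := by
    rw [Ne, ZMod.natCast_eq_zero_iff, Nat.pow_dvd_pow_iff_le_right hp.one_lt]
    omega
  have hsq : ((p ^ (α + 1) : ℕ) : ZMod (p ^ (α + 2))) ^ 2 = 0 := by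
    rw [← Nat.cast_pow, ZMod.natCast_eq_zero_iff, ← pow_mul]
    exact pow_dvd_pow p (by omega)
  exact unitPowSum_eq_zero_of_sq_eq_zero (ZMod.isPrimitive_stdAddChar _) hunit hne hsq a

variable {p : ℕ} [Fact p.Prime]

lemma Aq_prime_pow_eq_zero (α : ℕ) (N : ℤ) : Aq (p ^ (α + 2)) N = 0 := by
  obtain ⟨i, hi⟩ : ∃ i, (![2, 3, 4, 5] i).Coprime p := by
    rcases (Fact.out : p.Prime).eq_two_or_odd' with rfl | hodd
    exacts [⟨1, by decide⟩, ⟨0, Nat.coprime_two_left.2 hodd⟩]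
  rw [Aq, Yq_eq_unitRepSum, unitRepSum, Finset.sum_eq_zero, zero_div]
  intro h _
  rw [Finset.prod_eq_zero (Finset.mem_univ i) (unitPowSum_prime_pow_eq_zero hi α h), mul_zero]

lemma sFactor_prime_eq_one_add (N : ℤ) : sFactor p N = 1 + Aq p N := by
  rw [sFactor, tsum_eq_single 0, zero_add, pow_one]
  intro α hα
  obtain ⟨β, rfl⟩ := Nat.exists_eq_succ_of_ne_zero hα
  exact Aq_prime_pow_eq_zero β N

lemma sFactor_prime_eq (N : ℤ) :
    sFactor p N =
      ((p * unitRepCount ![2, 3, 4, 5] (N : ZMod p) / ((p - 1 : ℕ) : ℝ) ^ 4 : ℝ) : ℂ) := by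
  have hp : p.Prime := Fact.out
  have h0 : ((p - 1 : ℕ) : ℂ) ≠ 0 := Nat.cast_ne_zero.2 (Nat.sub_pos_of_lt hp.one_lt).ne'
  have hcount := card_mul_unitRepCount (ZMod.isPrimitive_stdAddChar p) ![2, 3, 4, 5] (N : ZMod p)
  rw [ZMod.card, ZMod.card_units, Fintype.card_fin] at hcount
  rw [sFactor_prime_eq_one_add, Aq, Nat.totient_prime hp, Yq_eq_unitRepSum]
  push_cast
  rw [hcount, add_div, div_self (pow_ne_zero 4 h0)]

lemma unitRepCount_two_three_four_five_pos {N : ℤ} (hN : Even N) :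
    0 < unitRepCount ![2, 3, 4, 5] (N : ZMod p) := by
  rcases (Fact.out : p.Prime).eq_two_or_odd' with rfl | hodd
  · rw [(ZMod.intCast_zmod_eq_zero_iff_dvd N 2).2 (by exact_mod_cast hN.two_dvd)]
    refine Finset.card_pos.2 ⟨1, Finset.mem_filter.2 ⟨Finset.mem_univ _, ?_⟩⟩
    simp only [Fin.sum_univ_four, Pi.one_apply, Units.val_one, one_pow]
    rfl
  · exact unitRepCount_pos_of_le_sum
      (le_sum_div_gcd_two_three_four_five (Nat.Odd.sub_odd hodd odd_one)) _

lemma one_div_cube_le_re_sFactor {N : ℤ} (hN : Even N) :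
    1 / (p : ℝ) ^ 3 ≤ (sFactor p N).re := by
  have hp : p.Prime := Fact.out
  have hp0 : (0 : ℝ) < p := Nat.cast_pos.2 hp.pos
  have hp1 : (0 : ℝ) < (p - 1 : ℕ) := Nat.cast_pos.2 (Nat.sub_pos_of_lt hp.one_lt)
  have hcount : (1 : ℝ) ≤ unitRepCount ![2, 3, 4, 5] (N : ZMod p) :=
    Nat.one_le_cast.2 (unitRepCount_two_three_four_five_pos hN)
  rw [sFactor_prime_eq, Complex.ofReal_re]
  calc 1 / (p : ℝ) ^ 3 = p * 1 / (p : ℝ) ^ 4 := by field_simp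
    _ ≤ p * unitRepCount ![2, 3, 4, 5] (N : ZMod p) / ((p - 1 : ℕ) : ℝ) ^ 4 := by
        gcongr
        exact Nat.sub_le p 1

lemma norm_Aq_prime_le (N : ℤ) : ‖Aq p N‖ ≤ 230400 * (p : ℝ) ^ (-(3 / 2) : ℝ) := by
  have hp : p.Prime := Fact.out
  have hp0 : (0 : ℝ) < p := Nat.cast_pos.2 hp.pos
  have hY : ‖Yq p N‖ ≤ 120 ^ 2 * √p ^ 5 := by
    have := norm_unitRepSum_le (ZMod.isPrimitive_stdAddChar p) (k := ![2, 3, 4, 5]) (by decide)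
      (j := 1) (by decide) (N : ZMod p)
    rwa [← Yq_eq_unitRepSum, ZMod.card, Fintype.card_fin,
      show ∏ i, ![2, 3, 4, 5] i = 120 by decide] at this
  have htotient : (p : ℝ) / 2 ≤ (p - 1 : ℕ) := by
    have htwo : (2 : ℝ) ≤ p := by exact_mod_cast hp.two_le
    rw [Nat.cast_pred hp.pos]
    linarith
  have hrpow : (p : ℝ) ^ (-(3 / 2) : ℝ) = √p ^ 5 / p ^ 4 := by
    rw [Real.sqrt_eq_rpow, ← Real.rpow_natCast, ← Real.rpow_natCast, ← Real.rpow_mul hp0.le,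
      ← Real.rpow_sub hp0]
    norm_num
  rw [Aq, Nat.totient_prime hp, norm_div, norm_pow, Complex.norm_natCast, hrpow]
  calc ‖Yq p N‖ / ((p - 1 : ℕ) : ℝ) ^ 4 ≤ 120 ^ 2 * √p ^ 5 / ((p : ℝ) / 2) ^ 4 := by gcongr
    _ = 230400 * (√p ^ 5 / p ^ 4) := by
        field_simp
        norm_num

lemma one_sub_le_re_sFactor (N : ℤ) :
    1 - 230400 * (p : ℝ) ^ (-(3 / 2) : ℝ) ≤ (sFactor p N).re := by
  rw [sFactor_prime_eq_one_add, Complex.add_re, Complex.one_re]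
  linarith [neg_le_of_abs_le (Complex.abs_re_le_norm (Aq p N)), norm_Aq_prime_le (p := p) N]

end SingularSeries

lemma exists_pos_le_prod_of_one_sub_le {ι : Type*} {δ ε : ι → ℝ} (hδ : ∀ i, 0 < δ i)
    (hε : Summable ε) :
    ∃ c : ℝ, 0 < c ∧ ∀ (a : ι → ℝ) (s : Finset ι), (∀ i, δ i ≤ a i) → (∀ i, 1 - ε i ≤ a i) →
      c ≤ ∏ i ∈ s, a i := by
  set m : ι → ℝ := fun i => if ε i < 1 then 1 - ε i else δ i with hm
  have hpos (i : ι) : 0 < m i := by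
    simp only [hm]
    split_ifs with h
    exacts [sub_pos.2 h, hδ i]
  have hlog : Summable fun i => Real.log (m i) := by
    refine (Real.summable_log_one_add_of_summable hε.neg).congr_cofinite ?_
    filter_upwards [hε.tendsto_cofinite_zero.eventually_lt_const one_pos] with i hi
    simp only [hm, if_pos hi, sub_eq_add_neg]
  refine ⟨Real.exp (-∑' i, |Real.log (m i)|), Real.exp_pos _, fun a s hδa hεa => ?_⟩
  have hma (i : ι) : m i ≤ a i := by
    simp only [hm]
    split_ifs
    exacts [hεa i, hδa i]
  calc Real.exp (-∑' i, |Real.log (m i)|) ≤ Real.exp (∑ i ∈ s, Real.log (m i)) := by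
        refine Real.exp_le_exp.2 (neg_le.1 ?_)
        calc -∑ i ∈ s, Real.log (m i) ≤ ∑ i ∈ s, |Real.log (m i)| :=
              (neg_le_abs _).trans (Finset.abs_sum_le_sum_abs _ _)
          _ ≤ ∑' i, |Real.log (m i)| := hlog.abs.sum_le_tsum s fun i _ => abs_nonneg _
    _ = ∏ i ∈ s, m i := by
        rw [Real.exp_sum]
        exact Finset.prod_congr rfl fun i _ => Real.exp_log (hpos i)
    _ ≤ ∏ i ∈ s, a i := Finset.prod_le_prod (fun i _ => (hpos i).le) fun i _ => hma i

theorem singular_series_product_lower_bound_general :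
    ∃ c : ℝ, 0 < c ∧ ∀ N : ℤ, Even N → ∀ S : Finset Nat.Primes,
      c ≤ (∏ p ∈ S, sFactor p N).re := by
  have hsum : Summable fun p : Nat.Primes => 230400 * (p : ℝ) ^ (-(3 / 2) : ℝ) :=
    (Nat.Primes.summable_rpow.2 (by norm_num)).mul_left _
  have hδ (p : Nat.Primes) : 0 < 1 / (p : ℝ) ^ 3 :=
    one_div_pos.2 (pow_pos (Nat.cast_pos.2 p.2.pos) 3)
  have hprime (p : Nat.Primes) : Fact (p : ℕ).Prime := ⟨p.2⟩
  obtain ⟨c, hc, hprod⟩ := exists_pos_le_prod_of_one_sub_le hδ hsum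
  refine ⟨c, hc, fun N hN S => ?_⟩
  have hreal (p : Nat.Primes) : sFactor p N = ((sFactor p N).re : ℂ) := by
    rw [sFactor_prime_eq, Complex.ofReal_re]
  rw [Finset.prod_congr rfl fun p _ => hreal p, ← Complex.ofReal_prod, Complex.ofReal_re]
  exact hprod _ S (fun p => one_div_cube_le_re_sFactor hN) fun p => one_sub_le_re_sFactor N

/-- Lower bound for the singular series product:
`∏_{p ≤ P} s(p) ≫ (log P)^{-960}` uniformly in even `N`. -/
theorem singular_series_product_lower_bound :
    ∃ c : ℝ, 0 < c ∧ ∀ N : ℤ, Even N → ∀ P : ℝ, 2 ≤ P →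
      c * Real.log P ^ (-(960 : ℝ)) ≤
        (∏ p ∈ (Finset.Icc 1 ⌊P⌋₊).filter Nat.Prime, sFactor p N).re := by
  obtain ⟨c, hc, hprod⟩ := singular_series_product_lower_bound_general
  have hlog2 : 0 < Real.log 2 := Real.log_pos one_lt_two
  have hpow : 0 < Real.log 2 ^ (-(960 : ℝ)) := Real.rpow_pos_of_pos hlog2 _
  refine ⟨c / Real.log 2 ^ (-(960 : ℝ)), div_pos hc hpow, fun N hN P hP => ?_⟩
  have hle : Real.log P ^ (-(960 : ℝ)) ≤ Real.log 2 ^ (-(960 : ℝ)) :=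
    Real.rpow_le_rpow_of_nonpos hlog2 (Real.log_le_log two_pos hP) (by norm_num)
  calc c / Real.log 2 ^ (-(960 : ℝ)) * Real.log P ^ (-(960 : ℝ))
      ≤ c / Real.log 2 ^ (-(960 : ℝ)) * Real.log 2 ^ (-(960 : ℝ)) := by gcongr
    _ = c := div_mul_cancel₀ c hpow.ne'
    _ ≤ (∏ p ∈ (Finset.Icc 1 ⌊P⌋₊).filter Nat.Prime, sFactor p N).re := by
        rw [← Finset.prod_subtype_eq_prod_filter]
        exact hprod N hN _
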